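/- Let k be a field, v, w ∈ S_n with v ≠ w_0, and let i be the last ascent of v. Then: (I) if ℓ(w s_i) < ℓ(w) and L is the ≺-leading term of a nonzero essential minor of I_{v s_i, w}, then L° is divisible by the ≺-leading term of some nonzero essential minor of I_{v,w}; (II) if ℓ(w s_i) > ℓ(w) and L is the ≺-leading term of a nonzero essential minor of I_{v s_i, w}, then L°·z_{n−v(i+1)+1, i} is divisible by the ≺-leading term of some nonzero essential minor of I_{v,w}; (III) if ℓ(w s_i) > ℓ(w) and L is the ≺-leading term of a nonzero essential minor of I_{v s_i, w s_i}, then L° is divisible by the ≺-leading term of some nonzero essential minor of I_{v,w}. -/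

import Mathlib

/-!
Write `p` for the row of `z_last`.  As `i` is the last ascent of `v`, no variable of `Z^{(v)}` lies
to the right of column `i`, column `i + 1` is the unit vector `e_p`, and `z_last`, the entry `(p, i)`,
is the greatest variable.  Under the order-preserving injection `°`, the matrix `Z^{(v s_i)}` becomes
`Z^{(v)}` with `z_last` replaced by `0` and columns `i`, `i + 1` exchanged.  Hence everything reduces
to comparing minors of `(…, c + z_last e_p, e_p, …)` with minors of `(…, e_p, c, …)`:

* If the permitted columns do not end at column `i` (`IsLastAscent.hasMinor_of_ne`), a minor using
  both or neither of the two columns agrees up to sign with a minor of `Z^{(v)}`; so does one using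
  only `e_p`, or only `c` without row `p`.  For a minor using `c` and row `p` but not `e_p`, the
  leading term contains a variable of row `p`; replacing the column of that variable by `e_p` gives
  a minor of the same size which is the cofactor of that variable's entry.
* If the permitted columns end at column `i`, a minor containing `e_p` becomes one containing
  `c + z_last e_p`, and its leading term is multiplied by `z_last`
  (`IsLastAscent.hasMinor_mul_zlast`).
* If they end at column `i + 1`, deleting a suitable column gives a smaller minor, in columns `≤ i`,
  whose leading term divides the original one (`IsLastAscent.hasMinor_pred`).

The divisibility of leading terms by leading terms of cofactors (`isLead_row`, `isLead_col`) rests on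
the absence of cancellation in a Laplace expansion, the entries of one row or column being `0`, `1`
or variables occurring nowhere else (`isLead_sum`).

For (I), `w` has no essential box in column `i`; for (II), both situations occur.  For (III),
`essentialSet_mul` shows that an essential box of `w s_i` is essential for `w` with the same rank, or
moves to column `i`: from column `i - 1` with equal rank, or from column `i + 1` with rank
dropping by one, which is where the smaller minors are needed.
-/

open Equiv MvPolynomial

noncomputable section
open scoped Classical

variable {n : ℕ}

/-- The 0-based value of a permutation of `Fin n` on a natural number,
extended by the identity outside `{0, …, n-1}`. -/
def permVal (v : Equiv.Perm (Fin n)) (j : ℕ) : ℕ :=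
  if h : j < n then (v ⟨j, h⟩ : ℕ) else j

/-- The longest element `w₀` of the symmetric group, `w₀(i) = n + 1 - i` (1-based). -/
def longest : Equiv.Perm (Fin n) :=
  ⟨Fin.rev, Fin.rev, Fin.rev_rev, Fin.rev_rev⟩

/-- The Rothe diagram of `v`, as a set of 0-based boxes `(i, j)` where `i` counts rows
from the bottom and `j` columns from the left.  In 1-based terms this is
`{(i,j) : i < n - v(j) + 1 and j < v⁻¹(n - i + 1)}`. -/
def Rothe (v : Equiv.Perm (Fin n)) : Finset (ℕ × ℕ) :=
  (Finset.range n ×ˢ Finset.range n).filter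
    (fun p => p.1 + permVal v p.2 + 1 < n ∧ p.2 < permVal v.symm (n - 1 - p.1))

/-- The rank matrix `r^w_{ij} = #{k ≤ j : w(k) ≥ n - i + 1}` (translated to 0-based `i`, `j`). -/
def rankMat (w : Equiv.Perm (Fin n)) (i j : ℕ) : ℕ :=
  ((Finset.range n).filter (fun t => t ≤ j ∧ n ≤ permVal w t + i + 1)).card

/-- Bruhat order via rank matrices. -/
def bruhatLE (u w : Equiv.Perm (Fin n)) : Prop :=
  ∀ i j : ℕ, rankMat u i j ≤ rankMat w i j

/-- The essential set of `w`. -/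
def essentialSet (w : Equiv.Perm (Fin n)) : Finset (ℕ × ℕ) :=
  (Rothe w).filter (fun p => (p.1 + 1, p.2) ∉ Rothe w ∧ (p.1, p.2 + 1) ∉ Rothe w)

/-- The number of inversions (Coxeter length) of a permutation. -/
def invCount (u : Equiv.Perm (Fin n)) : ℕ :=
  ((Finset.univ : Finset (Fin n × Fin n)).filter
    (fun p => p.1 < p.2 ∧ u p.2 < u p.1)).card

/-- The adjacent transposition `s_l` (`l` 1-based) swapping `l` and `l+1`;
the identity if `l` is out of range. -/
def adjSwap {n : ℕ} (l : ℕ) : Equiv.Perm (Fin n) :=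
  if h : 1 ≤ l ∧ l < n then Equiv.swap ⟨l - 1, by omega⟩ ⟨l, h.2⟩ else 1

/-- The canonical (1-based) label of a box of `D(v)`: the `t`-th box from the left in
(1-based) row `i` gets label `i + t - 1`. -/
def canonLabel (v : Equiv.Perm (Fin n)) (b : ℕ × ℕ) : ℕ :=
  b.1 + ((Rothe v).filter (fun b' => b'.1 = b.1 ∧ b'.2 ≤ b.2)).card

/-- The boxes of `P` listed in reading order: rows from top (largest row index) to bottom,
left to right within each row. -/
def readingList (n : ℕ) (P : Finset (ℕ × ℕ)) : List (ℕ × ℕ) :=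
  ((List.range n).reverse).flatMap
    (fun i => ((List.range n).filter (fun j => decide ((i, j) ∈ P))).map (fun j => (i, j)))

/-- One step of the Demazure product: multiply by `s_ℓ` if that increases length. -/
def demStep (v : Equiv.Perm (Fin n)) (u : Equiv.Perm (Fin n)) (b : ℕ × ℕ) :
    Equiv.Perm (Fin n) :=
  if invCount u < invCount (u * adjSwap (canonLabel v b)) then u * adjSwap (canonLabel v b)
  else u

/-- The Demazure product of a pipe dream `P ⊆ D(v)`, scanning boxes in reading order. -/
def demazure (v : Equiv.Perm (Fin n)) (P : Finset (ℕ × ℕ)) : Equiv.Perm (Fin n) :=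
  (readingList n P).foldl (demStep v) 1

/-- Pipe dreams on `D(v)` whose Demazure product is `x`. -/
def Pipes (v x : Equiv.Perm (Fin n)) : Finset (Finset (ℕ × ℕ)) :=
  (Rothe v).powerset.filter (fun P => demazure v P = x)

/-- Reduced pipe dreams on `D(v)` for `x`. -/
def RedPipes (v x : Equiv.Perm (Fin n)) : Finset (Finset (ℕ × ℕ)) :=
  (Pipes v x).filter (fun P => P.card = invCount x)

/-- Faces of the pipe complex `Δ_{v,w}`: subsets `F ⊆ D(v)` such that `D(v) \ F`
contains a reduced pipe dream for `w₀ w`. -/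
def IsFace (v w : Equiv.Perm (Fin n)) (F : Finset (ℕ × ℕ)) : Prop :=
  F ⊆ Rothe v ∧ ∃ P ∈ RedPipes v (longest * w), P ⊆ Rothe v \ F

/-- The staircase `{(i,j) : i + j ≤ n}` (1-based), translated to 0-based boxes. -/
def staircase (n : ℕ) : Finset (ℕ × ℕ) :=
  (Finset.range n ×ˢ Finset.range n).filter (fun p => p.1 + p.2 + 2 ≤ n)

/-- The label `i + j - 1` (1-based) of a staircase box, in 0-based coordinates. -/
def fkLabel (b : ℕ × ℕ) : ℕ := b.1 + b.2 + 1

/-- One step of the Demazure product for Fomin–Kirillov pipe dreams. -/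
def fkStep (u : Equiv.Perm (Fin n)) (b : ℕ × ℕ) : Equiv.Perm (Fin n) :=
  if invCount u < invCount (u * adjSwap (fkLabel b)) then u * adjSwap (fkLabel b) else u

/-- The Demazure product of an FK pipe dream on the staircase. -/
def fkDemazure (n : ℕ) (P : Finset (ℕ × ℕ)) : Equiv.Perm (Fin n) :=
  (readingList n P).foldl fkStep 1

/-- FK pipe dreams on the staircase with Demazure product `x`. -/
def FKPipes (x : Equiv.Perm (Fin n)) : Finset (Finset (ℕ × ℕ)) :=
  (staircase n).powerset.filter (fun P => fkDemazure n P = x)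

/-- Reduced FK pipe dreams for `x`. -/
def RedFKPipes (x : Equiv.Perm (Fin n)) : Finset (Finset (ℕ × ℕ)) :=
  (FKPipes x).filter (fun P => P.card = invCount x)

/-- The coordinate ring `R_v = k[z_{ij} : (i,j) ∈ D(v)]`. -/
abbrev KLRing (k : Type) [Field k] (v : Equiv.Perm (Fin n)) : Type :=
  MvPolynomial {b : ℕ × ℕ // b ∈ Rothe v} k

/-- The specialized generic matrix `Z^{(v)}`: variables on `D(v)`, `1` in positions
`(n - v(j) + 1, j)` (1-based) and `0` elsewhere. -/
def klMatrix (k : Type) [Field k] (v : Equiv.Perm (Fin n)) :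
    Matrix (Fin n) (Fin n) (KLRing k v) := fun i j =>
  if h : ((i : ℕ), (j : ℕ)) ∈ Rothe v then X ⟨((i : ℕ), (j : ℕ)), h⟩
  else if (i : ℕ) + permVal v j + 1 = n then 1 else 0

/-- The minors of size `1 + r^w_{ij}` of the southwest submatrix `Z^{(v)}_{ij}`
(`(i,j)` a 0-based box, so rows `0..i` and columns `0..j`). -/
def minorsAt (k : Type) [Field k] (v w : Equiv.Perm (Fin n)) (i j : ℕ) :
    Set (KLRing k v) :=
  { d | ∃ ri ci : Fin (rankMat w i j + 1) → Fin n,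
      StrictMono ri ∧ StrictMono ci ∧ (∀ a, (ri a : ℕ) ≤ i) ∧ (∀ a, (ci a : ℕ) ≤ j) ∧
      d = ((klMatrix k v).submatrix ri ci).det }

/-- The Kazhdan–Lusztig ideal `I_{v,w}`. -/
def KLIdeal (k : Type) [Field k] (v w : Equiv.Perm (Fin n)) : Ideal (KLRing k v) :=
  Ideal.span { d | ∃ i j : ℕ, i < n ∧ j < n ∧ d ∈ minorsAt k v w i j }

/-- The essential minors of `I_{v,w}`: those at boxes of the essential set of `w`. -/
def essentialMinors (k : Type) [Field k] (v w : Equiv.Perm (Fin n)) : Set (KLRing k v) :=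
  { d | ∃ b ∈ essentialSet w, d ∈ minorsAt k v w b.1 b.2 }

/-- Significance of a variable: `z_{ij} ≻ z_{kl}` iff `j > l` or (`j = l` and `i < k`),
encoded so that larger significance means ≺-larger variable. -/
def sigIdx (n : ℕ) (b : ℕ × ℕ) : ℕ := b.2 * n + (n - 1 - b.1)

/-- The exponent in a monomial of the variable of significance `s`. -/
def expAt {v : Equiv.Perm (Fin n)} (m : {b : ℕ × ℕ // b ∈ Rothe v} →₀ ℕ) (s : ℕ) : ℕ :=
  ∑ b ∈ m.support, if sigIdx n (b : ℕ × ℕ) = s then m b else 0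

/-- The lexicographic comparison of monomials: `m ≻ m'`. -/
def monGT {v : Equiv.Perm (Fin n)} (m m' : {b : ℕ × ℕ // b ∈ Rothe v} →₀ ℕ) : Prop :=
  ∃ s : ℕ, expAt m' s < expAt m s ∧ ∀ t : ℕ, s < t → expAt m t = expAt m' t

/-- `L` is the ≺-leading term of `f`. -/
def IsLeadTerm (k : Type) [Field k] {v : Equiv.Perm (Fin n)} (f L : KLRing k v) : Prop :=
  ∃ m ∈ f.support, (∀ m' ∈ f.support, m' ≠ m → monGT m m') ∧
    L = MvPolynomial.monomial m (f.coeff m)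

/-- The initial ideal of `I` with respect to `≺`: the ideal generated by the leading
terms of all nonzero elements of `I`. -/
def initialIdeal (k : Type) [Field k] {v : Equiv.Perm (Fin n)} (I : Ideal (KLRing k v)) :
    Ideal (KLRing k v) :=
  Ideal.span { L | ∃ f ∈ I, f ≠ 0 ∧ IsLeadTerm k f L }


/-- `i` (1-based) is the last ascent of `v`: `v(i) < v(i+1)` and no ascent occurs later. -/
def IsLastAscent (v : Equiv.Perm (Fin n)) (i : ℕ) : Prop :=
  1 ≤ i ∧ i < n ∧ permVal v (i - 1) < permVal v i ∧
    ∀ i' : ℕ, i < i' → i' < n → ¬ permVal v (i' - 1) < permVal v i'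

/-- The box `z_last = (n - v(i+1) + 1, i)` (1-based), in 0-based coordinates,
where `i` is the last ascent of `v`. -/
def zlastBox (v : Equiv.Perm (Fin n)) (i : ℕ) : ℕ × ℕ :=
  (n - permVal v i - 1, i - 1)

/-- The relabeling map `φ`: delete the box `z_last` and move every other box of
column `i` (1-based) one step to the right. -/
def phiMap (v : Equiv.Perm (Fin n)) (i : ℕ) (P : Finset (ℕ × ℕ)) : Finset (ℕ × ℕ) :=
  P.filter (fun b => b.2 ≠ i - 1) ∪
    ((P.filter (fun b => b.2 = i - 1 ∧ b.1 ≠ n - permVal v i - 1)).image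
      (fun b => (b.1, b.2 + 1)))

/-- The box substitution underlying the map `°`: a box in (1-based) column `i+1` is moved
to column `i`; all other boxes are fixed. -/
def circBox (i : ℕ) (b : ℕ × ℕ) : ℕ × ℕ := if b.2 = i then (b.1, i - 1) else b

/-- The `k`-algebra homomorphism `° : R_{v s_i} → R_v` sending `z_{r,i+1} ↦ z_{r,i}` and
fixing all other variables (when `i` is the last ascent of `v`, each target is a genuine
variable of `R_v`, so the fallback value `0` is never used). -/
def circMap (k : Type) [Field k] (v : Equiv.Perm (Fin n)) (i : ℕ) :
    KLRing k (v * adjSwap i) →ₐ[k] KLRing k v :=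
  MvPolynomial.aeval (fun b : {b : ℕ × ℕ // b ∈ Rothe (v * adjSwap i)} =>
    if h : circBox i (b : ℕ × ℕ) ∈ Rothe v then (X ⟨circBox i (b : ℕ × ℕ), h⟩ : KLRing k v)
    else 0)

/-- The variable `z_last = z_{n-v(i+1)+1, i}` of `R_v` (fallback `1` if the box is not in
`D(v)`, which cannot happen when `i` is the last ascent of `v`). -/
def zlastVar (k : Type) [Field k] (v : Equiv.Perm (Fin n)) (i : ℕ) : KLRing k v :=
  if h : zlastBox v i ∈ Rothe v then X ⟨zlastBox v i, h⟩ else 1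


/-! ### Leading monomials -/

/-- Lexicographic comparison of exponent vectors, for variables ranked by `sig`. -/
def LexGT {σ : Type} (sig : σ → ℕ) (m m' : σ →₀ ℕ) : Prop :=
  ∃ x, m' x < m x ∧ ∀ y, sig x < sig y → m y = m' y

/-- `m` is the exponent of the lexicographic leading term of `f`. -/
def IsLead {σ k : Type} [Field k] (sig : σ → ℕ) (f : MvPolynomial σ k) (m : σ →₀ ℕ) : Prop :=
  m ∈ f.support ∧ ∀ m' ∈ f.support, m' ≠ m → LexGT sig m m'

/-- The ranking of the variables of `R_v` that defines `≺`. -/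
def boxSig (v : Equiv.Perm (Fin n)) (b : {b : ℕ × ℕ // b ∈ Rothe v}) : ℕ := sigIdx n b.1

lemma LexGT.add_right_iff {σ : Type} {sig : σ → ℕ} {m m' c : σ →₀ ℕ} :
    LexGT sig (m + c) (m' + c) ↔ LexGT sig m m' := by
  simp [LexGT]

lemma IsLead.neg {σ k : Type} [Field k] {sig : σ → ℕ} {f : MvPolynomial σ k} {m : σ →₀ ℕ}
    (h : IsLead sig f m) : IsLead sig (-f) m := by
  simpa [IsLead, MvPolynomial.support_neg] using h

lemma isLead_monomial_mul {σ k : Type} [Field k] {sig : σ → ℕ} {f : MvPolynomial σ k}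
    {m ε : σ →₀ ℕ} (h : IsLead sig (monomial ε 1 * f) m) :
    ∃ m', m = m' + ε ∧ IsLead sig f m' := by
  have key : ∀ q, q ∈ (monomial ε 1 * f).support ↔ ∃ q' ∈ f.support, q = q' + ε := by
    intro q
    rw [mem_support_iff, coeff_monomial_mul']
    constructor
    · intro hq
      by_cases hle : ε ≤ q
      · refine ⟨q - ε, ?_, (tsub_add_cancel_of_le hle).symm⟩
        simpa [hle] using hq
      · simp [hle] at hq
    · rintro ⟨q', hq', rfl⟩
      simpa using hq'
  obtain ⟨m', hm', rfl⟩ := (key m).1 h.1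
  refine ⟨m', rfl, hm', fun q hq hne => ?_⟩
  have := h.2 (q + ε) ((key _).2 ⟨q, hq, rfl⟩) (by simpa using hne)
  exact LexGT.add_right_iff.1 this

/-- Suppose `f = ∑ e x * M x`, where the nonzero `e x` are distinct monomials in a set `S` of
variables not occurring in the `M x`.  Then no two summands share a monomial, so the leading
monomial of `f` is a multiple of that of some `M x` with `e x ≠ 0`. -/
lemma isLead_sum {σ k ι : Type} [Field k] [Fintype ι] {sig : σ → ℕ}
    (e M : ι → MvPolynomial σ k) (S : Set σ)
    (hM : ∀ x, ∀ m ∈ (M x).support, ∀ s ∈ S, m s = 0)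
    (he : ∀ x, e x = 0 ∨ ∃ ε : σ →₀ ℕ, e x = monomial ε 1 ∧ ∀ s, s ∉ S → ε s = 0)
    (hinj : ∀ x y, e x = e y → e x ≠ 0 → x = y) {m : σ →₀ ℕ}
    (h : IsLead sig (∑ x, e x * M x) m) :
    ∃ x, e x ≠ 0 ∧ ∃ m' ≤ m, IsLead sig (M x) m' := by
  -- the part of a monomial of `e x * M x` supported on `S` is the monomial `e x`
  have key : ∀ x, ∀ q ∈ (e x * M x).support,
      e x ≠ 0 ∧ e x = monomial (q.filter (· ∈ S)) 1 := by
    intro x q hq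
    rcases he x with h0 | ⟨ε, hε, hS⟩
    · simp [h0] at hq
    · refine ⟨by rw [hε]; simp, ?_⟩
      rw [mem_support_iff, hε, coeff_monomial_mul'] at hq
      by_cases hle : ε ≤ q
      · have hq' : q - ε ∈ (M x).support := by simpa [hle] using hq
        suffices hfil : ε = q.filter (· ∈ S) by rw [hε, ← hfil]
        refine Finsupp.ext fun s => ?_
        by_cases hs : s ∈ S
        · have := hM x _ hq' s hs
          have h2 := hle s
          simp only [Finsupp.coe_tsub, Pi.sub_apply] at this
          rw [Finsupp.filter_apply_pos _ _ hs]
          omega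
        · rw [Finsupp.filter_apply_neg _ _ hs, hS s hs]
      · simp [hle] at hq
  have huniq : ∀ x y q, q ∈ (e x * M x).support → q ∈ (e y * M y).support → x = y := by
    intro x y q hx hy
    exact hinj x y ((key x q hx).2.trans (key y q hy).2.symm) (key x q hx).1
  have hcoeff : ∀ x q, q ∈ (e x * M x).support →
      coeff q (∑ x, e x * M x) = coeff q (e x * M x) := by
    intro x q hq
    rw [coeff_sum]
    refine Finset.sum_eq_single x (fun y _ hy => ?_) (by simp)
    by_contra hne
    exact hy (huniq y x q (mem_support_iff.2 hne) hq)
  obtain ⟨x, hx⟩ : ∃ x, m ∈ (e x * M x).support := by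
    by_contra! hcon
    have := mem_support_iff.1 h.1
    rw [coeff_sum] at this
    exact this (Finset.sum_eq_zero fun x _ => by simpa using hcon x)
  have hlead : IsLead sig (e x * M x) m := by
    refine ⟨hx, fun q hq hne => h.2 q ?_ hne⟩
    rw [mem_support_iff, hcoeff x q hq]
    exact mem_support_iff.1 hq
  rw [(key x m hx).2] at hlead
  obtain ⟨m', hm', hl⟩ := isLead_monomial_mul hlead
  exact ⟨x, (key x m hx).1, m', hm' ▸ le_self_add, hl⟩

lemma boxSig_injective (v : Equiv.Perm (Fin n)) : Function.Injective (boxSig v) := by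
  rintro ⟨⟨a, b⟩, h⟩ ⟨⟨a', b'⟩, h'⟩ heq
  simp only [Rothe, Finset.mem_filter, Finset.mem_product, Finset.mem_range] at h h'
  simp only [boxSig, sigIdx] at heq
  have h1 : b = b' := by
    have := congrArg (· / n) heq
    have hn : 0 < n := by omega
    simpa [Nat.mul_comm _ n, Nat.mul_add_div hn, Nat.div_eq_of_lt (show n - 1 - a < n by omega),
      Nat.div_eq_of_lt (show n - 1 - a' < n by omega)] using this
  subst h1
  have h2 : a = a' := by omega
  subst h2
  rfl

lemma expAt_boxSig {v : Equiv.Perm (Fin n)} (m : {b : ℕ × ℕ // b ∈ Rothe v} →₀ ℕ)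
    (x : {b : ℕ × ℕ // b ∈ Rothe v}) : expAt m (boxSig v x) = m x := by
  unfold expAt
  by_cases hx : x ∈ m.support
  · rw [Finset.sum_eq_single x]
    · simp [boxSig]
    · intro y _ hy
      rw [if_neg]
      exact fun h => hy (boxSig_injective v h)
    · exact fun h => absurd hx h
  · rw [Finset.sum_eq_zero]
    · simpa using (by simpa using hx : m x = 0).symm
    · intro y hy
      rw [if_neg]
      intro h
      exact hx (boxSig_injective v h ▸ hy)

lemma expAt_eq_zero {v : Equiv.Perm (Fin n)} (m : {b : ℕ × ℕ // b ∈ Rothe v} →₀ ℕ) {s : ℕ}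
    (hs : ∀ x, boxSig v x ≠ s) : expAt m s = 0 :=
  Finset.sum_eq_zero fun y _ => if_neg (hs y)

lemma monGT_iff {v : Equiv.Perm (Fin n)} (m m' : {b : ℕ × ℕ // b ∈ Rothe v} →₀ ℕ) :
    monGT m m' ↔ LexGT (boxSig v) m m' := by
  constructor
  · rintro ⟨s, hs, ht⟩
    obtain ⟨x, rfl⟩ : ∃ x, boxSig v x = s := by
      by_contra! hcon
      rw [expAt_eq_zero m hcon] at hs
      omega
    refine ⟨x, by simpa [expAt_boxSig] using hs, fun y hy => ?_⟩
    simpa [expAt_boxSig] using ht _ hy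
  · rintro ⟨x, hx, hy⟩
    refine ⟨boxSig v x, by simpa [expAt_boxSig] using hx, fun t ht => ?_⟩
    by_cases hex : ∃ y, boxSig v y = t
    · obtain ⟨y, rfl⟩ := hex
      simpa [expAt_boxSig] using hy y ht
    · push Not at hex
      rw [expAt_eq_zero m hex, expAt_eq_zero m' hex]

lemma isLeadTerm_iff {k : Type} [Field k] {v : Equiv.Perm (Fin n)} (f L : KLRing k v) :
    IsLeadTerm k f L ↔ ∃ m, IsLead (boxSig v) f m ∧ L = monomial m (f.coeff m) := by
  simp only [IsLeadTerm, IsLead, monGT_iff, and_assoc]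

lemma IsLead.rename {σ τ k : Type} [Field k] {sig : σ → ℕ} {sig' : τ → ℕ} {f : σ → τ}
    (hf : Function.Injective f) (hs : ∀ x y, sig' (f x) < sig' (f y) → sig x < sig y)
    {D : MvPolynomial σ k} {m : σ →₀ ℕ} (h : IsLead sig D m) :
    IsLead sig' (MvPolynomial.rename f D) (m.mapDomain f) := by
  refine ⟨?_, fun q hq hne => ?_⟩
  · rw [support_rename_of_injective hf]
    exact Finset.mem_image_of_mem _ h.1
  · rw [support_rename_of_injective hf] at hq
    obtain ⟨q', hq', rfl⟩ := Finset.mem_image.1 hq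
    obtain ⟨x, hx, hy⟩ := h.2 q' hq' (fun h => hne (by rw [h]))
    refine ⟨f x, by simpa [Finsupp.mapDomain_apply hf] using hx, fun y hlt => ?_⟩
    by_cases hex : ∃ z, f z = y
    · obtain ⟨z, rfl⟩ := hex
      simpa [Finsupp.mapDomain_apply hf] using hy z (hs _ _ hlt)
    · rw [Finsupp.mapDomain_of_notMem_range _ _ hex, Finsupp.mapDomain_of_notMem_range _ _ hex]

/-- Adding a multiple of the greatest variable `z` to a polynomial free of `z`. -/
lemma isLead_add_X_mul {σ k : Type} [Field k] {sig : σ → ℕ} {z : σ}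
    (hz : ∀ y, sig y ≤ sig z) {F D : MvPolynomial σ k}
    (hF : ∀ q ∈ F.support, q z = 0) {m : σ →₀ ℕ} (h : IsLead sig D m) :
    IsLead sig (F + X z * D) (m + Finsupp.single z 1) := by
  refine ⟨?_, fun q hq hne => ?_⟩
  · rw [mem_support_iff, coeff_add, add_comm m, coeff_X_mul]
    have : coeff (Finsupp.single z 1 + m) F = 0 := by
      by_contra hne
      have := hF _ (mem_support_iff.2 hne)
      simp at this
    rw [this, zero_add]
    exact mem_support_iff.1 h.1
  · rcases Finset.mem_union.1 (support_add hq) with hq | hq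
    · exact ⟨z, by simp [hF q hq], fun y hy => absurd (hz y) (by omega)⟩
    · rw [support_X_mul] at hq
      obtain ⟨q', hq', rfl⟩ := Finset.mem_map.1 hq
      have : LexGT sig m q' := h.2 q' hq' (by
        rintro rfl
        exact hne (by simp [add_comm]))
      rw [addLeftEmbedding_apply, add_comm _ q']
      exact LexGT.add_right_iff.2 this

/-! ### Expanding minors along a row or a column -/

lemma permVal_inj (v : Equiv.Perm (Fin n)) {a b : ℕ} (ha : a < n) (hb : b < n)
    (h : permVal v a = permVal v b) : a = b := by
  simp only [permVal, ha, hb, dif_pos] at h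
  simpa using v.injective (Fin.ext h)

/-- Every entry of `Z^{(v)}` is a monomial in its own variable, `1`, or `0`. -/
lemma klMatrix_cases (k : Type) [Field k] (v : Equiv.Perm (Fin n)) (r j : Fin n) :
    (∃ h : ((r : ℕ), (j : ℕ)) ∈ Rothe v,
      klMatrix k v r j = monomial (Finsupp.single ⟨((r : ℕ), (j : ℕ)), h⟩ 1) 1) ∨
    (klMatrix k v r j = monomial 0 1 ∧ (r : ℕ) + permVal v j + 1 = n) ∨
    klMatrix k v r j = 0 := by
  unfold klMatrix
  by_cases h : ((r : ℕ), (j : ℕ)) ∈ Rothe v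
  · exact Or.inl ⟨h, by simp [h, X]⟩
  · by_cases h1 : (r : ℕ) + permVal v j + 1 = n
    · exact Or.inr (Or.inl ⟨by simp [h, h1], h1⟩)
    · exact Or.inr (Or.inr (by simp [h, h1]))

/-- Equal nonzero entries of `Z^{(v)}` lying in a common row or column coincide. -/
lemma klMatrix_entry_inj (k : Type) [Field k] (v : Equiv.Perm (Fin n)) {r j r' j' : Fin n}
    (hl : r = r' ∨ j = j') (h : klMatrix k v r j = klMatrix k v r' j')
    (h0 : klMatrix k v r j ≠ 0) : r = r' ∧ j = j' := by
  rcases klMatrix_cases k v r j with ⟨b, hb⟩ | ⟨hb, h1⟩ | hb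
  · rcases klMatrix_cases k v r' j' with ⟨b', hb'⟩ | ⟨hb', h1'⟩ | hb'
    · rw [hb, hb', monomial_left_inj one_ne_zero,
        Finsupp.single_left_inj one_ne_zero] at h
      simp only [Subtype.mk.injEq, Prod.mk.injEq] at h
      exact ⟨Fin.ext h.1, Fin.ext h.2⟩
    · rw [hb, hb', monomial_left_inj one_ne_zero] at h
      simp at h
    · exact absurd (h.trans hb') h0
  · rcases klMatrix_cases k v r' j' with ⟨b', hb'⟩ | ⟨hb', h1'⟩ | hb'
    · rw [hb, hb', monomial_left_inj one_ne_zero] at h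
      exact absurd h.symm (by simp)
    · rcases hl with rfl | rfl
      · exact ⟨rfl, Fin.ext (permVal_inj v j.2 j'.2 (by omega))⟩
      · exact ⟨Fin.ext (by omega), rfl⟩
    · exact absurd (h.trans hb') h0
  · exact absurd hb h0

/-- A determinant only involves the variables of the entries of the matrix. -/
lemma det_free {σ k ι : Type} [Field k] [Fintype ι] [DecidableEq ι] (S : Set σ)
    (M : Matrix ι ι (MvPolynomial σ k)) (hM : ∀ x y, M x y ∈ supported k Sᶜ) :
    ∀ m ∈ M.det.support, ∀ s ∈ S, m s = 0 := by
  have hdet : M.det ∈ supported k Sᶜ := by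
    rw [Matrix.det_apply]
    refine Subalgebra.sum_mem _ fun g _ => ?_
    rw [Units.smul_def]
    exact Subalgebra.zsmul_mem _ (Subalgebra.prod_mem _ fun x _ => hM _ _) _
  intro m hm s hs
  by_contra hne
  have hv : s ∈ M.det.vars := by
    rw [mem_vars_iff_mem_support]
    exact ⟨m, hm, by simpa using hne⟩
  exact (mem_supported.1 hdet hv) hs

lemma monomial_one_mem_supported {σ k : Type} [Field k] {S : Set σ} {s : σ} (hs : s ∈ S) :
    (monomial (Finsupp.single s 1) 1 : MvPolynomial σ k) ∈ supported k S :=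
  X_mem_supported.2 hs

lemma klMatrix_mem_supported (k : Type) [Field k] (v : Equiv.Perm (Fin n)) (r j : Fin n)
    (S : Set {b : ℕ × ℕ // b ∈ Rothe v})
    (hS : ∀ h, (⟨((r : ℕ), (j : ℕ)), h⟩ : {b : ℕ × ℕ // b ∈ Rothe v}) ∈ S) :
    klMatrix k v r j ∈ supported k S := by
  rcases klMatrix_cases k v r j with ⟨h, hb⟩ | ⟨hb, _⟩ | hb
  · exact hb ▸ monomial_one_mem_supported (hS h)
  · exact hb ▸ Subalgebra.one_mem _
  · exact hb ▸ Subalgebra.zero_mem _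

lemma klMatrix_zero_or (k : Type) [Field k] (v : Equiv.Perm (Fin n)) (r j : Fin n)
    (S : Set {b : ℕ × ℕ // b ∈ Rothe v})
    (hS : ∀ h, (⟨((r : ℕ), (j : ℕ)), h⟩ : {b : ℕ × ℕ // b ∈ Rothe v}) ∈ S) :
    klMatrix k v r j = 0 ∨ ∃ ε : {b : ℕ × ℕ // b ∈ Rothe v} →₀ ℕ,
      klMatrix k v r j = monomial ε 1 ∧ ∀ s, s ∉ S → ε s = 0 := by
  rcases klMatrix_cases k v r j with ⟨h, hb⟩ | ⟨hb, _⟩ | hb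
  · refine Or.inr ⟨_, hb, fun s hs => Finsupp.single_eq_of_ne ?_⟩
    rintro rfl
    exact hs (hS h)
  · exact Or.inr ⟨0, hb, by simp⟩
  · exact Or.inl hb

/-- The leading monomial of a minor of `Z^{(v)}` is a multiple of the leading monomial of one
of the cofactors along any given row `y`. -/
lemma isLead_row {k : Type} [Field k] {v : Equiv.Perm (Fin n)} {s : ℕ} {ri ci : Fin s → Fin n}
    (hri : Function.Injective ri) (hci : Function.Injective ci) (y : Fin s)
    {m : {b : ℕ × ℕ // b ∈ Rothe v} →₀ ℕ}
    (h : IsLead (boxSig v) ((klMatrix k v).submatrix ri ci).det m) :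
    ∃ x, klMatrix k v (ri y) (ci x) ≠ 0 ∧ ∃ m' ≤ m,
      IsLead (boxSig v) (((klMatrix k v).submatrix ri ci).adjugate x y) m' := by
  rw [Matrix.det_eq_sum_mul_adjugate_row _ y] at h
  refine isLead_sum (fun x => klMatrix k v (ri y) (ci x)) _ {b | b.1.1 = (ri y : ℕ)}
    ?_ ?_ ?_ h
  · intro x
    rw [Matrix.adjugate_apply]
    refine det_free _ _ fun a b => ?_
    by_cases ha : a = y
    · subst ha
      rw [Matrix.updateRow_self, Pi.single_apply]
      split_ifs
      · exact Subalgebra.one_mem _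
      · exact Subalgebra.zero_mem _
    · rw [Matrix.updateRow_ne ha]
      refine klMatrix_mem_supported k v _ _ _ fun hb => ?_
      simpa [Fin.val_inj] using fun hh => ha (hri hh)
  · exact fun x => klMatrix_zero_or k v _ _ _ fun hb => rfl
  · exact fun a b hab h0 => hci (klMatrix_entry_inj k v (Or.inl rfl) hab h0).2

/-- The leading monomial of a minor of `Z^{(v)}` is a multiple of the leading monomial of one
of the cofactors along any given column `x`. -/
lemma isLead_col {k : Type} [Field k] {v : Equiv.Perm (Fin n)} {s : ℕ} {ri ci : Fin s → Fin n}
    (hri : Function.Injective ri) (hci : Function.Injective ci) (x : Fin s)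
    {m : {b : ℕ × ℕ // b ∈ Rothe v} →₀ ℕ}
    (h : IsLead (boxSig v) ((klMatrix k v).submatrix ri ci).det m) :
    ∃ y, klMatrix k v (ri y) (ci x) ≠ 0 ∧ ∃ m' ≤ m,
      IsLead (boxSig v) (((klMatrix k v).submatrix ri ci).adjugate x y) m' := by
  rw [Matrix.det_eq_sum_mul_adjugate_col _ x] at h
  refine isLead_sum (fun y => klMatrix k v (ri y) (ci x))
    (fun y => ((klMatrix k v).submatrix ri ci).adjugate x y) {b | b.1.2 = (ci x : ℕ)}
    ?_ ?_ ?_ h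
  · intro y
    rw [← Matrix.transpose_apply (Matrix.adjugate _) y x, Matrix.adjugate_transpose,
      Matrix.adjugate_apply]
    refine det_free _ _ fun a b => ?_
    by_cases ha : a = x
    · subst ha
      rw [Matrix.updateRow_self, Pi.single_apply]
      split_ifs
      · exact Subalgebra.one_mem _
      · exact Subalgebra.zero_mem _
    · rw [Matrix.updateRow_ne ha]
      refine klMatrix_mem_supported k v _ _ _ fun hb => ?_
      simpa [Fin.val_inj] using fun hh => ha (hci hh)
  · exact fun y => klMatrix_zero_or k v _ _ _ fun hb => rfl
  · exact fun a b hab h0 => hri (klMatrix_entry_inj k v (Or.inr rfl) hab h0).1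

/-! ### Rothe diagrams of `v` and `v s_i` -/

/-- The transposition `s_i` on 0-based indices. -/
def tau (i j : ℕ) : ℕ := if j = i - 1 then i else if j = i then i - 1 else j

lemma permVal_lt (v : Equiv.Perm (Fin n)) {j : ℕ} (hj : j < n) : permVal v j < n := by
  simp [permVal, hj]

lemma permVal_symm_permVal (v : Equiv.Perm (Fin n)) (j : ℕ) :
    permVal v.symm (permVal v j) = j := by
  by_cases hj : j < n <;> simp [permVal, hj]

lemma permVal_permVal_symm (v : Equiv.Perm (Fin n)) (j : ℕ) :
    permVal v (permVal v.symm j) = j := by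
  by_cases hj : j < n <;> simp [permVal, hj]

lemma adjSwap_apply {i : ℕ} (h1 : 1 ≤ i) (h2 : i < n) (j : Fin n) :
    ((adjSwap i : Equiv.Perm (Fin n)) j : ℕ) = tau i j := by
  simp only [adjSwap, h1, h2, and_self, dif_pos, Equiv.swap_apply_def, tau, Fin.ext_iff]
  split_ifs <;> rfl

lemma tau_lt {i j : ℕ} (h2 : i < n) (hj : j < n) : tau i j < n := by
  unfold tau; split_ifs <;> omega

lemma tau_tau {i j : ℕ} : tau i (tau i j) = j := by
  unfold tau; split_ifs <;> omega

lemma permVal_mul {i : ℕ} (v : Equiv.Perm (Fin n)) (h1 : 1 ≤ i) (h2 : i < n) (j : ℕ) :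
    permVal (v * adjSwap i) j = permVal v (tau i j) := by
  by_cases hj : j < n
  · have := tau_lt h2 hj
    simp only [permVal, hj, this, dif_pos, Equiv.Perm.mul_apply]
    congr 2
    exact Fin.ext (adjSwap_apply h1 h2 _)
  · have : tau i j = j := by unfold tau; split_ifs <;> omega
    rw [this]; simp [permVal, hj]

lemma permVal_symm_mul {i : ℕ} (v : Equiv.Perm (Fin n)) (h1 : 1 ≤ i) (h2 : i < n) (y : ℕ) :
    permVal (v * adjSwap i).symm y = tau i (permVal v.symm y) := by
  have h := permVal_permVal_symm (v * adjSwap i) y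
  rw [permVal_mul v h1 h2] at h
  have h3 := permVal_symm_permVal v (tau i (permVal (v * adjSwap i).symm y))
  rw [h] at h3
  rw [h3, tau_tau]

lemma mem_rothe (v : Equiv.Perm (Fin n)) {r j : ℕ} :
    (r, j) ∈ Rothe v ↔ r < n ∧ j < n ∧ r + permVal v j + 1 < n ∧
      j < permVal v.symm (n - 1 - r) := by
  simp [Rothe, and_assoc]

namespace IsLastAscent

variable {v : Equiv.Perm (Fin n)} {i : ℕ}

lemma dec (hi : IsLastAscent v i) {t : ℕ} (h1 : i < t) (h2 : t < n) :
    permVal v t < permVal v i := by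
  obtain ⟨-, hin, -, hd⟩ := hi
  induction t with
  | zero => omega
  | succ t ih =>
    have h3 := hd (t + 1) h1 h2
    have h4 : permVal v t ≠ permVal v (t + 1) := fun h => by
      have := permVal_inj v (by omega) h2 h
      omega
    simp only [Nat.add_sub_cancel] at h3
    rcases Nat.lt_or_ge i t with h5 | h5
    · have := ih h5 (by omega)
      omega
    · have : t = i := by omega
      subst this
      omega

/-- No box of `D(v)` lies to the right of (1-based) column `i`. -/
lemma col_lt (hi : IsLastAscent v i) {r j : ℕ} (h : (r, j) ∈ Rothe v) : j < i := by
  rw [mem_rothe] at h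
  obtain ⟨hr, hj, h1, h2⟩ := h
  by_contra! hij
  obtain ⟨-, hin, -, hd⟩ := id hi
  have hy := permVal_permVal_symm v (n - 1 - r)
  have hlt : permVal v.symm (n - 1 - r) < n := permVal_lt _ (by omega)
  -- an ascent between columns `j` and `v⁻¹(n - 1 - r)` would contradict that `i` is the last one
  have key : ∀ t, j < t → t < n → permVal v t < permVal v j := by
    intro t
    induction t with
    | zero => omega
    | succ t ih =>
      intro h3 h4
      have h5 := hd (t + 1) (by omega) h4
      have h6 : permVal v t ≠ permVal v (t + 1) := fun h => by
        have := permVal_inj v (by omega) h4 h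
        omega
      simp only [Nat.add_sub_cancel] at h5
      rcases Nat.lt_or_ge j t with h7 | h7
      · have := ih h7 (by omega)
        omega
      · have : t = j := by omega
        subst this
        omega
  have := key _ h2 hlt
  omega

lemma mem_rothe_mul (hi : IsLastAscent v i) {r j : ℕ} :
    (r, j) ∈ Rothe (v * adjSwap i) ↔
      (j ≠ i - 1 ∧ j ≠ i ∧ (r, j) ∈ Rothe v) ∨
      (j = i ∧ (r, i - 1) ∈ Rothe v ∧ r + permVal v i + 1 ≠ n) := by
  obtain ⟨h1, h2, h3, -⟩ := id hi
  have hcol : ∀ r' j', (r', j') ∈ Rothe v → j' < i := fun r' j' h => hi.col_lt h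
  have hc := hcol r j
  simp only [mem_rothe, permVal_mul v h1 h2, permVal_symm_mul v h1 h2] at hc ⊢
  by_cases hr : r < n
  swap
  · simp [hr]
  by_cases hj : j < n
  swap
  · have : j ≠ i := by omega
    simp [hj, this]
  have hy := permVal_permVal_symm v (n - 1 - r)
  have hlt : permVal v.symm (n - 1 - r) < n := permVal_lt _ (by omega)
  have hdec : ∀ t, i < t → t < n → permVal v t < permVal v i := fun t => hi.dec
  generalize permVal v.symm (n - 1 - r) = t at *
  have hd := hdec t
  have hti : t = i → permVal v t = permVal v i := fun h => by rw [h]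
  have hti' : t = i - 1 → permVal v t = permVal v (i - 1) := fun h => by rw [h]
  have hinj : permVal v t = permVal v i → t = i := permVal_inj v hlt h2
  by_cases e1 : j = i - 1
  · subst e1
    have e2 : i - 1 ≠ i := by omega
    simp only [tau, if_true, hr, hj, e2, true_and, ne_eq, not_true_eq_false, false_and, or_false,
      iff_false]
    split_ifs <;> omega
  by_cases e2 : j = i
  · subst e2
    simp only [tau, if_true, e1, if_false, hr, hj, true_and, ne_eq, not_true_eq_false, false_and,
      false_or, and_false, show j - 1 < n by omega]
    split_ifs <;> omega
  · simp only [tau, e1, e2, if_false, hr, hj, true_and, ne_eq, not_false_eq_true, false_and,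
      or_false]
    split_ifs <;> omega

lemma zlast_mem (hi : IsLastAscent v i) : zlastBox v i ∈ Rothe v := by
  obtain ⟨h1, h2, h3, -⟩ := id hi
  have := permVal_lt v h2
  rw [zlastBox, mem_rothe]
  rw [show n - 1 - (n - permVal v i - 1) = permVal v i by omega, permVal_symm_permVal]
  omega

/-- The variable `z_last` is the greatest variable of `R_v`. -/
lemma boxSig_le (hi : IsLastAscent v i) (b : {b : ℕ × ℕ // b ∈ Rothe v}) :
    boxSig v b ≤ boxSig v ⟨zlastBox v i, hi.zlast_mem⟩ := by
  obtain ⟨⟨r, j⟩, hb⟩ := b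
  obtain ⟨h1, h2, h3, -⟩ := id hi
  have hlt := permVal_lt v h2
  have hj := hi.col_lt hb
  rw [mem_rothe] at hb
  have hy := permVal_permVal_symm v (n - 1 - r)
  have htn : permVal v.symm (n - 1 - r) < n := permVal_lt _ (by omega)
  simp only [boxSig, sigIdx, zlastBox]
  rcases Nat.lt_or_ge j (i - 1) with h | h
  · calc j * n + (n - 1 - r) ≤ (j + 1) * n := by rw [Nat.succ_mul]; omega
      _ ≤ (i - 1) * n := Nat.mul_le_mul_right _ h
      _ ≤ _ := Nat.le_add_right _ _
  · have : j = i - 1 := by omega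
    subst this
    rcases Nat.lt_or_ge i (permVal v.symm (n - 1 - r)) with h5 | h5
    · have := hi.dec h5 htn
      omega
    · have : permVal v.symm (n - 1 - r) = i := by omega
      rw [this] at hy
      omega

lemma circBox_mem (hi : IsLastAscent v i) {b : ℕ × ℕ} (hb : b ∈ Rothe (v * adjSwap i)) :
    circBox i b ∈ Rothe v := by
  obtain ⟨r, j⟩ := b
  unfold circBox
  rcases hi.mem_rothe_mul.1 hb with ⟨_, h2, h⟩ | ⟨h2, h, _⟩
  · rwa [if_neg (by exact h2)]
  · rwa [if_pos (by exact h2)]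

/-- The injection `D(v s_i) → D(v)` of boxes underlying `°`. -/
def circFun (hi : IsLastAscent v i) (b : {b : ℕ × ℕ // b ∈ Rothe (v * adjSwap i)}) :
    {b : ℕ × ℕ // b ∈ Rothe v} := ⟨circBox i b.1, hi.circBox_mem b.2⟩

lemma circFun_injective (hi : IsLastAscent v i) : Function.Injective hi.circFun := by
  rintro ⟨⟨r, j⟩, hb⟩ ⟨⟨r', j'⟩, hb'⟩ h
  have h1 := hi.mem_rothe_mul.1 hb
  have h2 := hi.mem_rothe_mul.1 hb'
  simp only [circFun, circBox, Subtype.mk.injEq] at h ⊢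
  split_ifs at h <;> simp only [Prod.mk.injEq] at h ⊢ <;> omega

lemma circFun_mono (hi : IsLastAscent v i) (x y : {b : ℕ × ℕ // b ∈ Rothe (v * adjSwap i)})
    (h : boxSig v (hi.circFun x) < boxSig v (hi.circFun y)) :
    boxSig (v * adjSwap i) x < boxSig (v * adjSwap i) y := by
  obtain ⟨⟨r, j⟩, hb⟩ := x
  obtain ⟨⟨r', j'⟩, hb'⟩ := y
  have h1 : j ≠ i - 1 ∧ j ≤ i := by
    rcases hi.mem_rothe_mul.1 hb with ⟨h1, h2, h3⟩ | ⟨h2, _, _⟩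
    · exact ⟨h1, (hi.col_lt h3).le⟩
    · have := hi.1
      omega
  have h2 : j' ≠ i - 1 ∧ j' ≤ i := by
    rcases hi.mem_rothe_mul.1 hb' with ⟨h1, h2, h3⟩ | ⟨h2, _, _⟩
    · exact ⟨h1, (hi.col_lt h3).le⟩
    · have := hi.1
      omega
  have hin : (i - 1) * n + n = i * n := by
    rw [← Nat.succ_mul]; congr 1; have := hi.1; omega
  have hr : r < n := ((mem_rothe _).1 hb).1
  have hr' : r' < n := ((mem_rothe _).1 hb').1
  simp only [boxSig, sigIdx, circFun, circBox] at h ⊢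
  have hmul : ∀ a b : ℕ, a < b → a * n + n ≤ b * n := fun a b hab => by
    rw [← Nat.succ_mul]; exact Nat.mul_le_mul_right _ hab
  have hjj := hmul j j'
  have hjj' := hmul j' (i - 1)
  by_cases e : j = i <;> by_cases e' : j' = i
  · subst e; subst e'
    simp only [if_true] at h
    omega
  · subst e
    simp only [if_true, e', if_false] at h
    omega
  · subst e'
    simp only [if_true, e, if_false] at h
    omega
  · simpa only [e, e', if_false] using h

lemma circMap_eq (hi : IsLastAscent v i) (k : Type) [Field k] (f : KLRing k (v * adjSwap i)) :
    circMap k v i f = rename hi.circFun f := by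
  suffices h : circMap k v i = rename hi.circFun by rw [h]
  refine MvPolynomial.algHom_ext fun b => ?_
  simp only [circMap, aeval_X, rename_X]
  rw [dif_pos (hi.circBox_mem b.2)]
  rfl

lemma zlastVar_eq (hi : IsLastAscent v i) (k : Type) [Field k] :
    zlastVar k v i = X ⟨zlastBox v i, hi.zlast_mem⟩ := by
  rw [zlastVar, dif_pos hi.zlast_mem]

lemma klMatrix_col (hi : IsLastAscent v i) (k : Type) [Field k] (r j : Fin n)
    (hj : (j : ℕ) = i) :
    klMatrix k v r j = if (r : ℕ) + permVal v i + 1 = n then 1 else 0 := by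
  unfold klMatrix
  rw [dif_neg, hj]
  intro h
  have := hi.col_lt h
  omega

lemma klMatrix_zlast (hi : IsLastAscent v i) (k : Type) [Field k] (r j : Fin n)
    (hj : (j : ℕ) = i - 1) (hr : (r : ℕ) + permVal v i + 1 = n) :
    klMatrix k v r j = zlastVar k v i := by
  have hbox : ((r : ℕ), (j : ℕ)) = zlastBox v i := by
    rw [zlastBox, hj, show (r : ℕ) = n - permVal v i - 1 by omega]
  have hm : ((r : ℕ), (j : ℕ)) ∈ Rothe v := hbox ▸ hi.zlast_mem
  rw [hi.zlastVar_eq, klMatrix, dif_pos hm]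
  congr 1
  exact Subtype.ext hbox

/-- Under `°`, the matrix `Z^{(v s_i)}` becomes `Z^{(v)}` with `z_last` set to zero and columns
`i` and `i + 1` exchanged. -/
lemma circMap_klMatrix (hi : IsLastAscent v i) (k : Type) [Field k] (r j j' : Fin n)
    (hj : (j' : ℕ) = tau i j) :
    circMap k v i (klMatrix k (v * adjSwap i) r j) =
      if (j : ℕ) = i ∧ (r : ℕ) + permVal v i + 1 = n then 0 else klMatrix k v r j' := by
  obtain ⟨h1, h2, h3, -⟩ := id hi
  have hne : (j : ℕ) = i → (r : ℕ) + permVal v i + 1 = n → permVal v (i - 1) ≠ permVal v i := by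
    omega
  have hmem := hi.mem_rothe_mul (r := r) (j := j)
  by_cases hb : ((r : ℕ), (j : ℕ)) ∈ Rothe (v * adjSwap i)
  · rw [klMatrix, dif_pos hb, hi.circMap_eq, rename_X]
    have hcb : circBox i ((r : ℕ), (j : ℕ)) = ((r : ℕ), (j' : ℕ)) := by
      rcases hmem.1 hb with ⟨h5, h6, _⟩ | ⟨h6, _, _⟩
      · simp [circBox, hj, tau, h5, h6]
      · have : i ≠ i - 1 := by omega
        simp [circBox, hj, tau, h6, this]
    have hm : ((r : ℕ), (j' : ℕ)) ∈ Rothe v := hcb ▸ hi.circBox_mem hb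
    rw [if_neg, klMatrix, dif_pos hm]
    · congr 1
      exact Subtype.ext hcb
    · rcases hmem.1 hb with h | h <;> omega
  · rw [klMatrix, dif_neg hb, permVal_mul v h1 h2]
    by_cases hc : (j : ℕ) = i ∧ (r : ℕ) + permVal v i + 1 = n
    · rw [if_pos hc, if_neg, map_zero]
      have : i ≠ i - 1 := by omega
      simp only [hc.1, tau, this, if_true, if_false]
      omega
    · rw [if_neg hc, klMatrix, dif_neg, hj]
      · split_ifs <;> simp
      · intro hm
        apply hb
        have hlt := hi.col_lt hm
        rw [hmem]
        unfold tau at hj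
        by_cases e1 : (j : ℕ) = i - 1
        · rw [if_pos e1] at hj
          omega
        · by_cases e2 : (j : ℕ) = i
          · rw [if_neg e1, if_pos e2] at hj
            rw [hj] at hm
            exact Or.inr ⟨e2, hm, fun h => hc ⟨e2, h⟩⟩
          · rw [if_neg e1, if_neg e2] at hj
            rw [hj] at hm
            exact Or.inl ⟨e1, e2, hm⟩

end IsLastAscent

/-! ### Comparing minors of `Z^{(v s_i)}` and `Z^{(v)}` -/

/-- Some minor of `Z^{(v)}` of size `s`, within rows `≤ a` and columns `≤ b`, has a leading
monomial dividing `m`.  The rows and columns of the minor may come in any order. -/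
def HasMinor (k : Type) [Field k] (v : Equiv.Perm (Fin n)) (s a b : ℕ)
    (m : {b : ℕ × ℕ // b ∈ Rothe v} →₀ ℕ) : Prop :=
  ∃ g h : Fin s → Fin n, (∀ x, (g x : ℕ) ≤ a) ∧ (∀ x, (h x : ℕ) ≤ b) ∧
    ∃ m' ≤ m, IsLead (boxSig v) ((klMatrix k v).submatrix g h).det m'

lemma HasMinor.mono {k : Type} [Field k] {v : Equiv.Perm (Fin n)} {s a b b' : ℕ}
    {m m' : {b : ℕ × ℕ // b ∈ Rothe v} →₀ ℕ} (h : HasMinor k v s a b m) (hb : b ≤ b')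
    (hm : m ≤ m') : HasMinor k v s a b' m' := by
  obtain ⟨g, c, hg, hc, q, hq, hl⟩ := h
  exact ⟨g, c, hg, fun x => (hc x).trans hb, q, hq.trans hm, hl⟩

lemma IsLead.of_neg_one_pow_mul {σ k : Type} [Field k] {sig : σ → ℕ} {f : MvPolynomial σ k}
    {m : σ →₀ ℕ} {t : ℕ} (h : IsLead sig ((-1) ^ t * f) m) : IsLead sig f m := by
  rcases neg_one_pow_eq_or (MvPolynomial σ k) t with h1 | h1
  · simpa [h1] using h
  · rw [h1, neg_one_mul] at h
    simpa using h.neg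

/-- An injective choice of rows or columns can be sorted. -/
lemma exists_sort {s : ℕ} {g : Fin s → Fin n} (hg : Function.Injective g) :
    ∃ e : Equiv.Perm (Fin s), StrictMono (g ∘ e) :=
  ⟨Tuple.sort g, (Tuple.monotone_sort g).strictMono_of_injective
    (hg.comp (Tuple.sort g).injective)⟩

lemma IsLead.sign_smul {σ k : Type} [Field k] {sig : σ → ℕ} {f : MvPolynomial σ k}
    {m : σ →₀ ℕ} (u : ℤˣ) (h : IsLead sig f m) : IsLead sig (((u : ℤ) : MvPolynomial σ k) * f) m := by
  rcases Int.units_eq_one_or u with rfl | rfl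
  · simpa using h
  · simpa using h.neg

lemma HasMinor.conclude {k : Type} [Field k] {v w : Equiv.Perm (Fin n)} {a b : ℕ}
    {m : {b : ℕ × ℕ // b ∈ Rothe v} →₀ ℕ} (h : HasMinor k v (rankMat w a b + 1) a b m)
    (hab : (a, b) ∈ essentialSet w) (c : k) :
    ∃ d' ∈ essentialMinors k v w, d' ≠ 0 ∧ ∃ L', IsLeadTerm k d' L' ∧ L' ∣ monomial m c := by
  obtain ⟨g, h, hg, hh, m', hm', hl⟩ := h
  have hne : ((klMatrix k v).submatrix g h).det ≠ 0 := fun h0 => by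
    have := hl.1
    simp [h0] at this
  have hgi : Function.Injective g := by
    intro x y hxy
    by_contra hxy'
    exact hne (Matrix.det_zero_of_row_eq hxy' (by ext z; simp [hxy]))
  have hhi : Function.Injective h := by
    intro x y hxy
    by_contra hxy'
    exact hne (Matrix.det_zero_of_column_eq hxy' (by intro z; simp [hxy]))
  obtain ⟨e, he⟩ := exists_sort hgi
  obtain ⟨e', he'⟩ := exists_sort hhi
  have hdet : ((klMatrix k v).submatrix (g ∘ e) (h ∘ e')).det =
      ((Equiv.Perm.sign e' : ℤ) : KLRing k v) * (((Equiv.Perm.sign e : ℤ) : KLRing k v) *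
        ((klMatrix k v).submatrix g h).det) := by
    rw [← Matrix.det_permute, ← Matrix.det_permute']
    rfl
  have hl' : IsLead (boxSig v) ((klMatrix k v).submatrix (g ∘ e) (h ∘ e')).det m' := by
    rw [hdet]
    exact (hl.sign_smul _).sign_smul _
  refine ⟨_, ⟨(a, b), hab, g ∘ e, h ∘ e', he, he', fun x => hg _, fun x => hh _, rfl⟩, ?_, _,
    (isLeadTerm_iff _ _).2 ⟨m', hl', rfl⟩, ?_⟩
  · intro h0
    have := hl'.1
    simp [h0] at this
  · have hc := mem_support_iff.1 hl'.1
    refine ⟨monomial (m - m') (c / coeff m' ((klMatrix k v).submatrix (g ∘ e) (h ∘ e')).det), ?_⟩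
    rw [monomial_mul, add_tsub_cancel_of_le hm', mul_div_cancel₀ _ hc]

lemma adjugate_eq_det_updateCol {ι R : Type} [Fintype ι] [DecidableEq ι] [CommRing R]
    (M : Matrix ι ι R) (x y : ι) :
    M.adjugate x y = (M.updateCol x (Pi.single y 1)).det := by
  rw [← Matrix.transpose_apply (Matrix.adjugate _) y x, Matrix.adjugate_transpose,
    Matrix.adjugate_apply, ← Matrix.det_transpose, Matrix.updateRow_transpose,
    Matrix.transpose_transpose]

namespace IsLastAscent

variable {v : Equiv.Perm (Fin n)} {i : ℕ}

lemma isLead_circMap (hi : IsLastAscent v i) {k : Type} [Field k] {D : KLRing k (v * adjSwap i)}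
    {m : {b : ℕ × ℕ // b ∈ Rothe (v * adjSwap i)} →₀ ℕ}
    (h : IsLead (boxSig (v * adjSwap i)) D m) :
    IsLead (boxSig v) (circMap k v i D) (m.mapDomain hi.circFun) := by
  rw [hi.circMap_eq]
  exact h.rename hi.circFun_injective hi.circFun_mono

lemma circMap_entry (hi : IsLastAscent v i) (k : Type) [Field k] (r j : Fin n) :
    circMap k v i (klMatrix k (v * adjSwap i) r j) =
      if (j : ℕ) = i ∧ (r : ℕ) + permVal v i + 1 = n then 0
      else klMatrix k v r ((adjSwap i : Equiv.Perm (Fin n)) j) :=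
  hi.circMap_klMatrix k r j _ (adjSwap_apply hi.1 hi.2.1 j)

lemma circMap_entry_left (hi : IsLastAscent v i) (k : Type) [Field k] (r j : Fin n)
    (hj : (j : ℕ) = i - 1) :
    circMap k v i (klMatrix k (v * adjSwap i) r j) =
      if (r : ℕ) + permVal v i + 1 = n then 1 else 0 := by
  have := hi.1
  rw [hi.circMap_entry, if_neg (by omega), hi.klMatrix_col]
  rw [adjSwap_apply hi.1 hi.2.1, hj, tau, if_pos rfl]

/-- If the row of `z_last` or the (1-based) column `i + 1` is avoided, `°` carries a minor to a
minor. -/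
lemma circMap_det (hi : IsLastAscent v i) (k : Type) [Field k] {s : ℕ} (ri ci : Fin s → Fin n)
    (h : ∀ x y, ¬ ((ci y : ℕ) = i ∧ (ri x : ℕ) + permVal v i + 1 = n)) :
    circMap k v i ((klMatrix k (v * adjSwap i)).submatrix ri ci).det =
      ((klMatrix k v).submatrix ri ((adjSwap i : Equiv.Perm (Fin n)) ∘ ci)).det := by
  rw [AlgHom.map_det]
  congr 1
  ext1 x y
  simp only [AlgHom.mapMatrix_apply, Matrix.map_apply, Matrix.submatrix_apply,
    hi.circMap_entry, Function.comp]
  rw [if_neg (h x y)]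

/-- Column `i + 1` of `Z^{(v)}` is the unit vector in the row of `z_last`, so it can be used to
clear the entry `z_last` of column `i`. -/
lemma det_clear (hi : IsLastAscent v i) {k : Type} [Field k] {s : ℕ} {ri h : Fin s → Fin n}
    {x0 x1 : Fin s} (hne : x1 ≠ x0) (h0 : (h x0 : ℕ) = i) (h1 : (h x1 : ℕ) = i - 1)
    {N : Matrix (Fin s) (Fin s) (KLRing k v)}
    (hN0 : ∀ r, N r x0 = if (ri r : ℕ) + permVal v i + 1 = n then 1 else 0)
    (hN1 : ∀ r, N r x1 = if (ri r : ℕ) + permVal v i + 1 = n then 0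
      else klMatrix k v (ri r) (h x1))
    (hN : ∀ r x, x ≠ x0 → x ≠ x1 → N r x = klMatrix k v (ri r) (h x)) :
    N.det = ((klMatrix k v).submatrix ri h).det := by
  rw [← Matrix.det_updateCol_add_smul_self N hne (zlastVar k v i)]
  congr 1
  ext1 r x
  by_cases e1 : x = x1
  · subst e1
    rw [Matrix.updateCol_self, hN0, hN1, Matrix.submatrix_apply]
    split_ifs with hp
    · rw [hi.klMatrix_zlast k _ _ h1 hp]
      simp
    · simp
  · rw [Matrix.updateCol_ne e1, Matrix.submatrix_apply]
    by_cases e0 : x = x0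
    · subst e0
      rw [hN0, hi.klMatrix_col k _ _ h0]
    · exact hN r x e0 e1

/-- Minors confined to initial columns containing both or neither of the (1-based) columns
`i`, `i + 1`. -/
lemma hasMinor_of_ne (hi : IsLastAscent v i) {k : Type} [Field k] {s a b : ℕ} (hb : b ≠ i - 1)
    {ri ci : Fin s → Fin n} (hri : Function.Injective ri) (hci : Function.Injective ci)
    (hra : ∀ x, (ri x : ℕ) ≤ a) (hcb : ∀ x, (ci x : ℕ) ≤ b)
    {m : {b : ℕ × ℕ // b ∈ Rothe (v * adjSwap i)} →₀ ℕ}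
    (hm : IsLead (boxSig (v * adjSwap i)) ((klMatrix k (v * adjSwap i)).submatrix ri ci).det m) :
    HasMinor k v s a b (m.mapDomain hi.circFun) := by
  have hi1 := hi.1
  have hi2 := hi.2.1
  have hsw : ∀ x, (((adjSwap i : Equiv.Perm (Fin n)) (ci x) : Fin n) : ℕ) ≤ b := by
    intro x
    have := hcb x
    rw [adjSwap_apply hi.1 hi.2.1, tau]
    split_ifs <;> omega
  by_cases hsimple : ∀ x y, ¬ ((ci y : ℕ) = i ∧ (ri x : ℕ) + permVal v i + 1 = n)
  · refine ⟨ri, _, hra, hsw, _, le_rfl, ?_⟩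
    have := hi.isLead_circMap hm
    rwa [hi.circMap_det k ri ci hsimple] at this
  push Not at hsimple
  obtain ⟨y, x1, hx1, hy⟩ := hsimple
  by_cases hc : ∃ x0, (ci x0 : ℕ) = i - 1
  · obtain ⟨x0, hx0⟩ := hc
    have hne : x1 ≠ x0 := by rintro rfl; omega
    refine ⟨ri, (adjSwap i : Equiv.Perm (Fin n)) ∘ ci, hra, hsw, _, le_rfl, ?_⟩
    have := hi.isLead_circMap hm
    rw [AlgHom.map_det] at this
    rwa [hi.det_clear (ri := ri) (h := (adjSwap i : Equiv.Perm (Fin n)) ∘ ci) hne] at this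
    · rw [Function.comp, adjSwap_apply hi1 hi2, hx0, tau, if_pos rfl]
    · rw [Function.comp, adjSwap_apply hi1 hi2, hx1, tau, if_neg (by omega), if_pos rfl]
    · exact fun r => hi.circMap_entry_left k _ _ hx0
    · intro r
      simp [hi.circMap_entry, hx1]
    · intro r x _ e1
      have : (ci x : ℕ) ≠ i := fun h => e1 (hci (Fin.ext (h.trans hx1.symm)))
      simp [hi.circMap_entry, this]
  · -- Column `i` is unused: a variable of the row of `z_last` divides the leading term, and
    -- its column may be replaced by the unit vector.
    obtain ⟨x0, hx0, m', hm', hl⟩ := isLead_row hri hci y hm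
    have hcirc : circMap k v i (klMatrix k (v * adjSwap i) (ri y) (ci x0)) ≠ 0 := by
      rw [hi.circMap_eq]
      exact fun h => hx0 (rename_injective _ hi.circFun_injective (by rw [h, map_zero]))
    have hne : x1 ≠ x0 := by
      rintro rfl
      rw [hi.circMap_entry, if_pos ⟨hx1, hy⟩] at hcirc
      exact hcirc rfl
    have hib : i ≤ b := hx1 ▸ hcb x1
    refine ⟨ri, Function.update ((adjSwap i : Equiv.Perm (Fin n)) ∘ ci) x0 ⟨i, hi2⟩, hra, ?_,
      _, Finsupp.mapDomain_mono hm', ?_⟩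
    · intro x
      by_cases e0 : x = x0
      · subst e0; simpa using hib
      · rw [Function.update_of_ne e0]; exact hsw x
    have := hi.isLead_circMap hl
    rw [adjugate_eq_det_updateCol, AlgHom.map_det] at this
    rwa [hi.det_clear (ri := ri)
      (h := Function.update ((adjSwap i : Equiv.Perm (Fin n)) ∘ ci) x0 ⟨i, hi2⟩) hne] at this
    · simp
    · rw [Function.update_of_ne hne, Function.comp, adjSwap_apply hi1 hi2, hx1, tau,
        if_neg (by omega), if_pos rfl]
    · intro r
      have hiff : r = y ↔ (ri r : ℕ) + permVal v i + 1 = n :=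
        ⟨fun h => h ▸ hy, fun h => hri (Fin.ext (by omega))⟩
      simp only [AlgHom.mapMatrix_apply, Matrix.map_apply, Matrix.updateCol_self,
        Pi.single_apply, hiff]
      split_ifs <;> simp
    · intro r
      rw [Function.update_of_ne hne]
      simp [hi.circMap_entry, hx1, Matrix.updateCol_ne hne]
    · intro r x e0 e1
      have : (ci x : ℕ) ≠ i := fun h => e1 (hci (Fin.ext (h.trans hx1.symm)))
      rw [Function.update_of_ne e0]
      simp [hi.circMap_entry, this, Matrix.updateCol_ne e0]

/-- Minors using no column after column `i`: the unit column `i` of `Z^{(v s_i)}` becomes a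
column of `Z^{(v)}` whose leading entry is `z_last`. -/
lemma hasMinor_mul_zlast (hi : IsLastAscent v i) {k : Type} [Field k] {s a : ℕ}
    {ri ci : Fin s → Fin n} (hci : Function.Injective ci)
    (hra : ∀ x, (ri x : ℕ) ≤ a) (hcb : ∀ x, (ci x : ℕ) ≤ i - 1)
    {m : {b : ℕ × ℕ // b ∈ Rothe (v * adjSwap i)} →₀ ℕ}
    (hm : IsLead (boxSig (v * adjSwap i)) ((klMatrix k (v * adjSwap i)).submatrix ri ci).det m) :
    HasMinor k v s a (i - 1)
      (m.mapDomain hi.circFun + Finsupp.single ⟨zlastBox v i, hi.zlast_mem⟩ 1) := by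
  have hi1 := hi.1
  have hi2 := hi.2.1
  have hsw : ∀ x, (ci x : ℕ) ≠ i - 1 → (adjSwap i : Equiv.Perm (Fin n)) (ci x) = ci x := by
    intro x hx
    have := hcb x
    apply Fin.ext
    rw [adjSwap_apply hi.1 hi.2.1, tau, if_neg hx, if_neg (by omega)]
  have hlead := hi.isLead_circMap hm
  by_cases hc : ∃ x0, (ci x0 : ℕ) = i - 1
  · obtain ⟨x0, hx0⟩ := hc
    refine ⟨ri, ci, hra, hcb, _, le_rfl, ?_⟩
    set N := (circMap k v i).mapMatrix ((klMatrix k (v * adjSwap i)).submatrix ri ci) with hN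
    have hN' : ∀ r x, N r x = circMap k v i (klMatrix k (v * adjSwap i) (ri r) (ci x)) :=
      fun _ _ => rfl
    have hNx : ∀ r x, x ≠ x0 → N r x = klMatrix k v (ri r) (ci x) := by
      intro r x hx
      have h1 : (ci x : ℕ) ≠ i - 1 := fun h => hx (hci (Fin.ext (h.trans hx0.symm)))
      have := hcb x
      rw [hN', hi.circMap_entry, if_neg (by omega), hsw x h1]
    have hN0 : ∀ r, N r x0 = if (ri r : ℕ) + permVal v i + 1 = n then 1 else 0 := fun r => by
      rw [hN', hi.circMap_entry_left k _ _ hx0]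
    set col : Fin s → KLRing k v := fun r =>
      if (ri r : ℕ) + permVal v i + 1 = n then 0 else klMatrix k v (ri r) (ci x0) with hcol
    have hdet : ((klMatrix k v).submatrix ri ci).det =
        (N.updateCol x0 col).det + X ⟨zlastBox v i, hi.zlast_mem⟩ * N.det := by
      have hself : N.updateCol x0 (fun r => N r x0) = N := Matrix.updateCol_eq_self N x0
      conv_rhs => rw [← hself, ← Matrix.det_updateCol_smul, hself, ← Matrix.det_updateCol_add]
      congr 1
      ext1 r x
      by_cases e0 : x = x0
      · subst e0
        simp only [Matrix.updateCol_self, Pi.add_apply, Pi.smul_apply, hN0, hcol,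
          Matrix.submatrix_apply]
        split_ifs with hp
        · rw [hi.klMatrix_zlast k _ _ hx0 hp, hi.zlastVar_eq]
          simp
        · simp
      · rw [Matrix.updateCol_ne e0, hNx r x e0]
        rfl
    rw [AlgHom.map_det, ← hN] at hlead
    rw [hdet]
    refine isLead_add_X_mul hi.boxSig_le (fun q hq => ?_) hlead
    refine det_free {⟨zlastBox v i, hi.zlast_mem⟩} _ (fun r x => ?_) q hq _ rfl
    by_cases e0 : x = x0
    · subst e0
      rw [Matrix.updateCol_self, hcol]
      dsimp only
      split_ifs with hp
      · exact Subalgebra.zero_mem _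
      · refine klMatrix_mem_supported k v _ _ _ fun hb => ?_
        have := permVal_lt v hi2
        simp only [zlastBox, Set.mem_compl_iff, Set.mem_singleton_iff, Subtype.mk.injEq,
          Prod.mk.injEq]
        have := (ri r).2
        omega
    · rw [Matrix.updateCol_ne e0, hNx r x e0]
      refine klMatrix_mem_supported k v _ _ _ fun hb => ?_
      have h1 : (ci x : ℕ) ≠ i - 1 := fun h => e0 (hci (Fin.ext (h.trans hx0.symm)))
      simp only [zlastBox, Set.mem_compl_iff, Set.mem_singleton_iff, Subtype.mk.injEq,
        Prod.mk.injEq]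
      omega
  · push Not at hc
    rw [hi.circMap_det k ri ci (fun x y => by have := hcb y; omega)] at hlead
    rw [show (adjSwap i : Equiv.Perm (Fin n)) ∘ ci = ci from
      funext fun x => hsw x (hc x)] at hlead
    exact ⟨ri, ci, hra, hcb, _, le_self_add, hlead⟩

/-- Removing one column, a minor of `Z^{(v s_i)}` in columns `≤ i + 1` yields a minor of
`Z^{(v)}` in columns `≤ i` of size one less. -/
lemma hasMinor_pred (hi : IsLastAscent v i) {k : Type} [Field k] {s a : ℕ}
    {ri ci : Fin (s + 1) → Fin n} (hri : Function.Injective ri) (hci : Function.Injective ci)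
    (hra : ∀ x, (ri x : ℕ) ≤ a) (hcb : ∀ x, (ci x : ℕ) ≤ i)
    {m : {b : ℕ × ℕ // b ∈ Rothe (v * adjSwap i)} →₀ ℕ}
    (hm : IsLead (boxSig (v * adjSwap i)) ((klMatrix k (v * adjSwap i)).submatrix ri ci).det m) :
    HasMinor k v s a (i - 1) (m.mapDomain hi.circFun) := by
  have hi1 := hi.1
  have hi2 := hi.2.1
  obtain ⟨x0, hx0, hx1⟩ : ∃ x0, (∀ x, x ≠ x0 → (ci x : ℕ) ≠ i - 1) ∧
      ((ci x0 : ℕ) = i - 1 ∨ ∀ x, x ≠ x0 → (ci x : ℕ) ≠ i) := by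
    by_cases h1 : ∃ x0, (ci x0 : ℕ) = i - 1
    · obtain ⟨x0, h0⟩ := h1
      exact ⟨x0, fun x hx h => hx (hci (Fin.ext (h.trans h0.symm))), Or.inl h0⟩
    · push Not at h1
      by_cases h2 : ∃ x0, (ci x0 : ℕ) = i
      · obtain ⟨x0, h0⟩ := h2
        exact ⟨x0, fun x _ => h1 x,
          Or.inr fun x hx h => hx (hci (Fin.ext (h.trans h0.symm)))⟩
      · push Not at h2
        exact ⟨0, fun x _ => h1 x, Or.inr fun x _ => h2 x⟩
  obtain ⟨y, hy, m', hm', hl⟩ := isLead_col hri hci x0 hm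
  rw [Matrix.adjugate_fin_succ_eq_det_submatrix] at hl
  have hl2 := hi.isLead_circMap hl.of_neg_one_pow_mul
  rw [Matrix.submatrix_submatrix, hi.circMap_det] at hl2
  · refine ⟨_, _, fun x => hra _, fun x => ?_, _, Finsupp.mapDomain_mono hm', hl2⟩
    have h1 := hx0 _ (Fin.succAbove_ne x0 x)
    have h2 := hcb (x0.succAbove x)
    simp only [Function.comp, adjSwap_apply hi1 hi2, tau]
    split_ifs <;> omega
  · rintro x z ⟨hz, hx⟩
    rcases hx1 with h | h
    · -- the unit column `i` has been removed together with the row of its only nonzero entry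
      have hcirc : circMap k v i (klMatrix k (v * adjSwap i) (ri y) (ci x0)) ≠ 0 := by
        rw [hi.circMap_eq]
        exact fun h => hy (rename_injective _ hi.circFun_injective (by rw [h, map_zero]))
      rw [hi.circMap_entry_left k _ _ h] at hcirc
      have hp : (ri y : ℕ) + permVal v i + 1 = n := by
        by_contra hp
        exact hcirc (if_neg hp)
      refine Fin.succAbove_ne y x (hri (Fin.ext ?_))
      simp only [Function.comp] at hx
      omega
    · exact h _ (Fin.succAbove_ne x0 z) hz

end IsLastAscent

/-! ### Essential sets, ranks and lengths of `w` and `w s_i` -/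

/-- With `y = n - 1 - a`, the box `(a, b)` is essential iff `w b < y ≤ w (b + 1)` and
`w⁻¹ (y - 1) ≤ b < w⁻¹ y`. -/
lemma mem_essentialSet_iff (w : Equiv.Perm (Fin n)) {a b : ℕ} :
    (a, b) ∈ essentialSet w ↔ a + 1 < n ∧ b + 1 < n ∧ permVal w b < n - 1 - a ∧
      b < permVal w.symm (n - 1 - a) ∧ n - 1 - a ≤ permVal w (b + 1) ∧
      permVal w.symm (n - 1 - (a + 1)) ≤ b := by
  simp only [essentialSet, Finset.mem_filter, mem_rothe]
  have h1 := permVal_permVal_symm w (n - 1 - a)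
  have h2 := permVal_symm_permVal w b
  have h3 : a < n → permVal w.symm (n - 1 - a) < n := fun _ => permVal_lt _ (by omega)
  have h4 : permVal w.symm (n - 1 - a) = b + 1 → permVal w (b + 1) = n - 1 - a := fun h => by
    rw [← h, h1]
  have h5 : permVal w b = n - 1 - (a + 1) → permVal w.symm (n - 1 - (a + 1)) = b := fun h => by
    rw [← h, h2]
  omega

lemma mul_adjSwap_mul_adjSwap {i : ℕ} (w : Equiv.Perm (Fin n)) :
    w * adjSwap i * adjSwap i = w := by
  unfold adjSwap
  split_ifs <;> simp

lemma invCount_le {i : ℕ} (w : Equiv.Perm (Fin n)) (h1 : 1 ≤ i) (h2 : i < n)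
    (h : permVal w (i - 1) < permVal w i) : invCount w ≤ invCount (w * adjSwap i) := by
  have hs : ∀ x : Fin n, (adjSwap i : Equiv.Perm (Fin n)) (adjSwap i x) = x := fun x =>
    Fin.ext (by rw [adjSwap_apply h1 h2, adjSwap_apply h1 h2, tau_tau])
  refine Finset.card_le_card_of_injOn
    (fun p => ((adjSwap i : Equiv.Perm (Fin n)) p.1, (adjSwap i : Equiv.Perm (Fin n)) p.2)) ?_ ?_
  · rintro ⟨x, y⟩ hp
    rw [Finset.mem_coe, Finset.mem_filter] at hp ⊢
    obtain ⟨-, hp⟩ := hp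
    simp only [Finset.mem_univ, true_and, Equiv.Perm.mul_apply, hs]
    refine ⟨?_, hp.2⟩
    rw [Fin.lt_def, adjSwap_apply h1 h2, adjSwap_apply h1 h2]
    have hxy : (x : ℕ) < y := hp.1
    have hne : ¬ ((x : ℕ) = i - 1 ∧ (y : ℕ) = i) := by
      rintro ⟨hx, hy⟩
      have hw : (w y : ℕ) < w x := hp.2
      rw [← hx, ← hy] at h
      simp only [permVal, x.2, y.2, dif_pos] at h
      exact absurd h (by simpa using hw.le)
    unfold tau
    split_ifs <;> omega
  · intro p _ q _ hpq
    simp only [Prod.mk.injEq, EmbeddingLike.apply_eq_iff_eq] at hpq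
    exact Prod.ext hpq.1 hpq.2

lemma permVal_ne {i : ℕ} (w : Equiv.Perm (Fin n)) (h1 : 1 ≤ i) (h2 : i < n) :
    permVal w (i - 1) ≠ permVal w i := fun h => by
  have := permVal_inj w (by omega) h2 h
  omega

lemma descent_of_invCount {i : ℕ} {w : Equiv.Perm (Fin n)} (h1 : 1 ≤ i) (h2 : i < n)
    (h : invCount (w * adjSwap i) < invCount w) : permVal w i < permVal w (i - 1) := by
  have := permVal_ne w h1 h2
  by_contra! hcon
  have := invCount_le w h1 h2 (by omega)
  omega

lemma ascent_of_invCount {i : ℕ} {w : Equiv.Perm (Fin n)} (h1 : 1 ≤ i) (h2 : i < n)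
    (h : invCount w < invCount (w * adjSwap i)) : permVal w (i - 1) < permVal w i := by
  have := descent_of_invCount (w := w * adjSwap i) h1 h2
    (by rwa [mul_adjSwap_mul_adjSwap])
  rw [permVal_mul w h1 h2, permVal_mul w h1 h2] at this
  have hne : i ≠ i - 1 := by omega
  simpa [tau, hne] using this

lemma rankMat_mul {i a b : ℕ} (w : Equiv.Perm (Fin n)) (h1 : 1 ≤ i) (h2 : i < n)
    (hb : b ≠ i - 1) : rankMat (w * adjSwap i) a b = rankMat w a b := by
  refine Finset.card_nbij' (tau i) (tau i) ?_ ?_ (fun _ _ => tau_tau) (fun _ _ => tau_tau)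
  · intro t ht
    simp only [Finset.mem_coe, Finset.mem_filter, Finset.mem_range, permVal_mul w h1 h2] at ht ⊢
    refine ⟨tau_lt h2 ht.1, ?_, ht.2.2⟩
    unfold tau
    split_ifs <;> omega
  · intro t ht
    simp only [Finset.mem_coe, Finset.mem_filter, Finset.mem_range, permVal_mul w h1 h2,
      tau_tau] at ht ⊢
    refine ⟨tau_lt h2 ht.1, ?_, ht.2.2⟩
    unfold tau
    split_ifs <;> omega

lemma rankMat_succ {a b : ℕ} (w : Equiv.Perm (Fin n)) (hb : b + 1 < n) :
    rankMat w a (b + 1) = rankMat w a b + if n ≤ permVal w (b + 1) + a + 1 then 1 else 0 := by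
  unfold rankMat
  split_ifs with h
  · rw [← Finset.card_insert_of_notMem (a := b + 1) (by simp)]
    congr 1
    ext t
    simp only [Finset.mem_filter, Finset.mem_range, Finset.mem_insert]
    constructor
    · rintro ⟨h3, h4, h5⟩
      by_cases e : t = b + 1
      · exact Or.inl e
      · exact Or.inr ⟨h3, by omega, h5⟩
    · rintro (rfl | ⟨h3, h4, h5⟩)
      · exact ⟨hb, le_rfl, h⟩
      · exact ⟨h3, by omega, h5⟩
  · rw [add_zero]
    congr 1
    ext t
    simp only [Finset.mem_filter, Finset.mem_range]
    constructor
    · rintro ⟨h3, h4, h5⟩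
      refine ⟨h3, ?_, h5⟩
      by_contra hcon
      have : t = b + 1 := by omega
      subst this
      exact h h5
    · rintro ⟨h3, h4, h5⟩
      exact ⟨h3, by omega, h5⟩

/-- In 1-based columns: if `w` ascends at `i`, an essential box of `w s_i` is essential for `w`,
or the box in the same row and column `i` is essential for `w`; in the latter case the original column is `i - 1` (with the
same rank) or `i + 1` (with rank one more). -/
lemma essentialSet_mul {i a b : ℕ} {w : Equiv.Perm (Fin n)} (h1 : 1 ≤ i) (h2 : i < n)
    (hw : permVal w (i - 1) < permVal w i) (h : (a, b) ∈ essentialSet (w * adjSwap i)) :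
    b ≠ i - 1 ∧ ((a, b) ∈ essentialSet w ∨ (a, i - 1) ∈ essentialSet w ∧
      ((b + 1 = i - 1 ∧ rankMat w a (i - 1) = rankMat w a b) ∨
        (b = i ∧ rankMat w a b = rankMat w a (i - 1) + 1))) := by
  have hii : i - 1 + 1 = i := by omega
  have hne : i ≠ i - 1 := by omega
  have r1 := rankMat_succ (a := a) w (b := i - 1) (by omega)
  rw [hii] at r1
  have r2 : b + 1 < n → _ := rankMat_succ (a := a) (b := b) w
  rw [mem_essentialSet_iff] at h
  rw [mem_essentialSet_iff, mem_essentialSet_iff, hii]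
  simp only [permVal_mul w h1 h2, permVal_symm_mul w h1 h2] at h
  have q1 := permVal_permVal_symm w (n - 1 - a)
  have q2 := permVal_permVal_symm w (n - 1 - (a + 1))
  generalize permVal w.symm (n - 1 - a) = t at *
  generalize permVal w.symm (n - 1 - (a + 1)) = t' at *
  obtain ⟨ha, hb, g1, g2, g3, g4⟩ := h
  have hti : t = i → permVal w t = permVal w i := fun h => by rw [h]
  have hti' : t = i - 1 → permVal w t = permVal w (i - 1) := fun h => by rw [h]
  have hsi : t' = i → permVal w t' = permVal w i := fun h => by rw [h]
  have hsi' : t' = i - 1 → permVal w t' = permVal w (i - 1) := fun h => by rw [h]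
  have r2 := r2 hb
  by_cases e1 : b = i - 1
  · subst e1
    simp only [tau, if_true, hii, hne, if_false] at g1 g3
    omega
  refine ⟨e1, ?_⟩
  by_cases e2 : b = i
  · subst e2
    have e3 : b + 1 ≠ b - 1 := by omega
    have e4 : b + 1 ≠ b := by omega
    simp only [tau, e1, if_true, if_false, e3, e4] at g1 g2 g3 g4
    split_ifs at * <;> omega
  by_cases e3 : b + 1 = i - 1
  · have e4 : b + 1 = i - 1 → permVal w (b + 1) = permVal w (i - 1) := fun h => by rw [h]
    rw [e3] at r2
    simp only [tau, e1, e2, if_true, if_false, e3] at g1 g2 g3 g4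
    rw [e3]
    split_ifs at * <;> omega
  · left
    have e4 : b + 1 ≠ i := by omega
    simp only [tau, e1, e2, e3, e4, if_false] at g1 g2 g3 g4
    split_ifs at * <;> omega

lemma essentialSet_descent {i a b : ℕ} {w : Equiv.Perm (Fin n)} (h1 : 1 ≤ i)
    (hw : permVal w i < permVal w (i - 1)) (h : (a, b) ∈ essentialSet w) : b ≠ i - 1 := by
  rintro rfl
  rw [mem_essentialSet_iff, show i - 1 + 1 = i by omega] at h
  omega

/-! ### The induction step -/

/-- Proposition 6.10: let `i` be the last ascent of `v`.
(I) If `i` is a descent of `w`, the image under `°` of the leading term of any nonzero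
essential minor of `I_{v s_i, w}` is divisible by the leading term of an essential minor
of `I_{v,w}`; (II) if `i` is an ascent of `w`, the same holds after multiplying by
`z_last`; (III) if `i` is an ascent of `w`, the image under `°` of the leading term of
any nonzero essential minor of `I_{v s_i, w s_i}` is divisible by the leading term of an
essential minor of `I_{v,w}`. -/
theorem leading_term_induction (n : ℕ) (k : Type) [Field k]
    (v w : Equiv.Perm (Fin n)) (i : ℕ) (hv : v ≠ longest) (hi : IsLastAscent v i) :
    ((invCount (w * adjSwap i) < invCount w →
      ∀ d ∈ essentialMinors k (v * adjSwap i) w, d ≠ 0 →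
        ∀ L, IsLeadTerm k d L →
          ∃ d' ∈ essentialMinors k v w, d' ≠ 0 ∧ ∃ L', IsLeadTerm k d' L' ∧
            L' ∣ circMap k v i L)) ∧
    ((invCount w < invCount (w * adjSwap i) →
      ∀ d ∈ essentialMinors k (v * adjSwap i) w, d ≠ 0 →
        ∀ L, IsLeadTerm k d L →
          ∃ d' ∈ essentialMinors k v w, d' ≠ 0 ∧ ∃ L', IsLeadTerm k d' L' ∧
            L' ∣ circMap k v i L * zlastVar k v i)) ∧
    ((invCount w < invCount (w * adjSwap i) →
      ∀ d ∈ essentialMinors k (v * adjSwap i) (w * adjSwap i), d ≠ 0 →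
        ∀ L, IsLeadTerm k d L →
          ∃ d' ∈ essentialMinors k v w, d' ≠ 0 ∧ ∃ L', IsLeadTerm k d' L' ∧
            L' ∣ circMap k v i L)) := by
  obtain ⟨h1, h2, -, -⟩ := id hi
  have hmap : ∀ (m : {b : ℕ × ℕ // b ∈ Rothe (v * adjSwap i)} →₀ ℕ) (c : k),
      circMap k v i (monomial m c) = monomial (m.mapDomain hi.circFun) c := fun m c => by
    rw [hi.circMap_eq, rename_monomial]
  have hmapz : ∀ (m : {b : ℕ × ℕ // b ∈ Rothe (v * adjSwap i)} →₀ ℕ) (c : k),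
      circMap k v i (monomial m c) * zlastVar k v i = monomial
        (m.mapDomain hi.circFun + Finsupp.single ⟨zlastBox v i, hi.zlast_mem⟩ 1) c :=
    fun m c => by rw [hmap, hi.zlastVar_eq, X, monomial_mul, mul_one]
  refine ⟨?_, ?_, ?_⟩
  · rintro hw _ ⟨⟨a, b⟩, hab, ri, ci, hri, hci, hra, hcb, rfl⟩ - L hL
    obtain ⟨m, hm, rfl⟩ := (isLeadTerm_iff _ _).1 hL
    rw [hmap]
    have hb := essentialSet_descent h1 (descent_of_invCount h1 h2 hw) hab
    exact (hi.hasMinor_of_ne hb hri.injective hci.injective hra hcb hm).conclude hab _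
  · rintro - _ ⟨⟨a, b⟩, hab, ri, ci, hri, hci, hra, hcb, rfl⟩ - L hL
    obtain ⟨m, hm, rfl⟩ := (isLeadTerm_iff _ _).1 hL
    rw [hmapz]
    by_cases hb : b = i - 1
    · subst hb
      exact (hi.hasMinor_mul_zlast hci.injective hra hcb hm).conclude hab _
    · exact ((hi.hasMinor_of_ne hb hri.injective hci.injective hra hcb hm).mono le_rfl
        le_self_add).conclude hab _
  · rintro hw _ ⟨⟨a, b⟩, hab, ri, ci, hri, hci, hra, hcb, rfl⟩ - L hL
    obtain ⟨m, hm, rfl⟩ := (isLeadTerm_iff _ _).1 hL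
    rw [hmap]
    obtain ⟨hb, hcase⟩ := essentialSet_mul h1 h2 (ascent_of_invCount h1 h2 hw) hab
    have hrank := rankMat_mul (a := a) w h1 h2 hb
    rcases hcase with hess | ⟨hess, ⟨hbi, hr⟩ | ⟨hbi, hr⟩⟩
    · have := hi.hasMinor_of_ne hb hri.injective hci.injective hra hcb hm
      rw [hrank] at this
      exact this.conclude hess _
    · have := hi.hasMinor_of_ne hb hri.injective hci.injective hra hcb hm
      rw [hrank, ← hr] at this
      exact (this.mono (by omega) le_rfl).conclude hess _
    · have := hi.hasMinor_pred hri.injective hci.injective hra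
        (fun x => (hcb x).trans hbi.le) hm
      rw [hrank, hr] at this
      exact this.conclude hess _

end
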